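/- arXiv:2311.11358 — 3 statements merged into one kernel-verified Lean document; each statement's English description precedes it below -/
import Mathlib

section
/- Let T > 0, let F : [0,T]×[0,T] → ℝ be continuous such that the partial derivative F₁(r,s) = ∂F(r,s)/∂r exists and is continuous on the triangle {(r,s) : 0 ≤ s ≤ r ≤ T}, let Θ be continuous on the triangle {(s,t) : 0 ≤ t ≤ s ≤ T}, and let ζ : [0,T] → ℝ be such that for all 0 ≤ t ≤ r ≤ T one has Θ(r,t)·F(r,r) + ∫_t^r Θ(s,t)·F₁(r,s) ds = ζ(r) (the value is independent of t). Then for every continuous h : [0,T] → ℝ and every t ∈ [0,T], ∫_t^T Θ(s,t)·( F(s,s)·h(s) + ∫_s^T F₁(r,s)·h(r) dr ) ds = ∫_t^T ζ(r)·h(r) dr. -/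
/-! For a fixed `t`, the left-hand side is the integral of `Θ(s,t) F(s,s) h(s)` plus an iterated
integral of `Θ(s,t) F₁(r,s) h(r)` over the triangle `t ≤ s ≤ r ≤ T`. The second integrand is a
continuous function times a function of `r` alone, so it is integrable on the compact triangle and
Fubini's theorem lets one integrate in `s` first. The coefficient of `h(r)` is then the expression
that the hypothesis identifies with `ζ(r)`. -/

open MeasureTheory Set

/-- The closed triangle `a ≤ s ≤ r ≤ b` on which Volterra kernels live, as a set of pairs `(r, s)`:
the first coordinate is the larger one, as in the argument order of the kernels `F₁(r, s)` and
`Θ(s, t)`. -/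
def volterraTriangle (a b : ℝ) : Set (ℝ × ℝ) :=
  {p | a ≤ p.2 ∧ p.2 ≤ p.1 ∧ p.1 ≤ b}

section Dirichlet

variable {a b : ℝ}

lemma volterraTriangle_subset_Icc_prod_Icc :
    volterraTriangle a b ⊆ Icc a b ×ˢ Icc a b :=
  fun _ ⟨has, hsr, hrb⟩ => ⟨⟨has.trans hsr, hrb⟩, ⟨has, hsr.trans hrb⟩⟩

lemma isClosed_volterraTriangle : IsClosed (volterraTriangle a b) :=
  (isClosed_le continuous_const continuous_snd).inter
    ((isClosed_le continuous_snd continuous_fst).inter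
      (isClosed_le continuous_fst continuous_const))

lemma isCompact_volterraTriangle : IsCompact (volterraTriangle a b) :=
  (isCompact_Icc.prod isCompact_Icc).of_isClosed_subset isClosed_volterraTriangle
    volterraTriangle_subset_Icc_prod_Icc

lemma Icc_inter_volterraTriangle_fst {s : ℝ} (hs : a ≤ s) :
    Icc a b ∩ (fun r => (r, s)) ⁻¹' volterraTriangle a b = Icc s b := by
  ext r
  exact ⟨fun ⟨_, _, hsr, hrb⟩ => ⟨hsr, hrb⟩,
    fun ⟨hsr, hrb⟩ => ⟨⟨hs.trans hsr, hrb⟩, hs, hsr, hrb⟩⟩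

lemma Icc_inter_volterraTriangle_snd {r : ℝ} (hr : r ≤ b) :
    Icc a b ∩ Prod.mk r ⁻¹' volterraTriangle a b = Icc a r := by
  ext s
  exact ⟨fun ⟨_, has, hsr, _⟩ => ⟨has, hsr⟩,
    fun ⟨has, hsr⟩ => ⟨⟨has, hsr.trans hr⟩, has, hsr, hr⟩⟩

variable {E : Type*} [NormedAddCommGroup E] {μ : Measure ℝ} {G : ℝ × ℝ → E}

lemma integrable_indicator_volterraTriangle [SFinite μ]
    (hG : IntegrableOn G (volterraTriangle a b) (μ.prod μ)) :
    Integrable ((volterraTriangle a b).indicator G)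
      ((μ.restrict (Icc a b)).prod (μ.restrict (Icc a b))) := by
  rw [Measure.prod_restrict]
  exact (hG.integrable_indicator isClosed_volterraTriangle.measurableSet).restrict

lemma integrableOn_volterraTriangle_smul_fst [NormedSpace ℝ E] [IsLocallyFiniteMeasure μ]
    {c : ℝ × ℝ → ℝ} {h : ℝ → E}
    (hc : ContinuousOn c (volterraTriangle a b)) (hh : IntegrableOn h (Icc a b) μ) :
    IntegrableOn (fun p => c p • h p.1) (volterraTriangle a b) (μ.prod μ) := by
  have : IsFiniteMeasure (μ.restrict (Icc a b)) :=
    isFiniteMeasure_restrict.2 isCompact_Icc.measure_ne_top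
  have hsquare : IntegrableOn (fun p : ℝ × ℝ => h p.1) (Icc a b ×ˢ Icc a b) (μ.prod μ) := by
    rw [IntegrableOn, ← Measure.prod_restrict]
    exact Integrable.comp_fst hh _
  exact (hsquare.mono_set volterraTriangle_subset_Icc_prod_Icc).continuousOn_smul hc
    isCompact_volterraTriangle

variable [NormedSpace ℝ E] [NullSingletonClass μ]

lemma setIntegral_indicator_volterraTriangle_fst {s : ℝ} (hs : s ∈ Icc a b) :
    ∫ r in Icc a b, (volterraTriangle a b).indicator G (r, s) ∂μ = ∫ r in s..b, G (r, s) ∂μ := by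
  have hmeas : MeasurableSet ((fun r => (r, s)) ⁻¹' volterraTriangle a b) :=
    isClosed_volterraTriangle.measurableSet.preimage measurable_prodMk_right
  calc ∫ r in Icc a b, (volterraTriangle a b).indicator G (r, s) ∂μ
      = ∫ r in Icc a b ∩ (fun r => (r, s)) ⁻¹' volterraTriangle a b, G (r, s) ∂μ :=
        setIntegral_indicator hmeas
    _ = ∫ r in s..b, G (r, s) ∂μ := by
        rw [Icc_inter_volterraTriangle_fst hs.1, integral_Icc_eq_integral_Ioc,
          intervalIntegral.integral_of_le hs.2]

lemma setIntegral_indicator_volterraTriangle_snd {r : ℝ} (hr : r ∈ Icc a b) :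
    ∫ s in Icc a b, (volterraTriangle a b).indicator G (r, s) ∂μ = ∫ s in a..r, G (r, s) ∂μ := by
  have hmeas : MeasurableSet (Prod.mk r ⁻¹' volterraTriangle a b) :=
    isClosed_volterraTriangle.measurableSet.preimage measurable_prodMk_left
  calc ∫ s in Icc a b, (volterraTriangle a b).indicator G (r, s) ∂μ
      = ∫ s in Icc a b ∩ Prod.mk r ⁻¹' volterraTriangle a b, G (r, s) ∂μ :=
        setIntegral_indicator hmeas
    _ = ∫ s in a..r, G (r, s) ∂μ := by
        rw [Icc_inter_volterraTriangle_snd hr.2, integral_Icc_eq_integral_Ioc,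
          intervalIntegral.integral_of_le hr.1]

variable [SFinite μ]

lemma intervalIntegrable_integral_volterraTriangle_fst (hab : a ≤ b)
    (hG : IntegrableOn G (volterraTriangle a b) (μ.prod μ)) :
    IntervalIntegrable (fun s => ∫ r in s..b, G (r, s) ∂μ) μ a b := by
  rw [intervalIntegrable_iff_integrableOn_Icc_of_le hab]
  exact IntegrableOn.congr_fun (integrable_indicator_volterraTriangle hG).integral_prod_right
    (fun _ => setIntegral_indicator_volterraTriangle_fst) measurableSet_Icc

lemma intervalIntegrable_integral_volterraTriangle_snd (hab : a ≤ b)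
    (hG : IntegrableOn G (volterraTriangle a b) (μ.prod μ)) :
    IntervalIntegrable (fun r => ∫ s in a..r, G (r, s) ∂μ) μ a b := by
  rw [intervalIntegrable_iff_integrableOn_Icc_of_le hab]
  exact IntegrableOn.congr_fun (integrable_indicator_volterraTriangle hG).integral_prod_left
    (fun _ => setIntegral_indicator_volterraTriangle_snd) measurableSet_Icc

theorem integral_integral_swap_volterraTriangle (hab : a ≤ b)
    (hG : IntegrableOn G (volterraTriangle a b) (μ.prod μ)) :
    ∫ s in a..b, ∫ r in s..b, G (r, s) ∂μ ∂μ = ∫ r in a..b, ∫ s in a..r, G (r, s) ∂μ ∂μ := by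
  simp only [intervalIntegral.integral_of_le hab, ← integral_Icc_eq_integral_Ioc]
  calc ∫ s in Icc a b, ∫ r in s..b, G (r, s) ∂μ ∂μ
      = ∫ s in Icc a b, ∫ r in Icc a b, (volterraTriangle a b).indicator G (r, s) ∂μ ∂μ :=
        setIntegral_congr_fun measurableSet_Icc
          fun _ hs => (setIntegral_indicator_volterraTriangle_fst hs).symm
    _ = ∫ r in Icc a b, ∫ s in Icc a b, (volterraTriangle a b).indicator G (r, s) ∂μ ∂μ :=
        (integral_integral_swap (f := fun r s => (volterraTriangle a b).indicator G (r, s))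
          (integrable_indicator_volterraTriangle hG)).symm
    _ = ∫ r in Icc a b, ∫ s in a..r, G (r, s) ∂μ ∂μ :=
        setIntegral_congr_fun measurableSet_Icc
          fun _ => setIntegral_indicator_volterraTriangle_snd

end Dirichlet

section Composition

variable {E : Type*} [NormedAddCommGroup E] [NormedSpace ℝ E] [CompleteSpace E]

theorem integral_smul_add_integral_volterra_eq {μ : Measure ℝ} [NullSingletonClass μ]
    [SFinite μ] {a b : ℝ} (hab : a ≤ b) {θ φ : ℝ → ℝ} {k : ℝ → ℝ → ℝ} {h : ℝ → E}
    (hdiag : IntervalIntegrable (fun s => (θ s * φ s) • h s) μ a b)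
    (htri : IntegrableOn (fun p => (θ p.2 * k p.1 p.2) • h p.1) (volterraTriangle a b)
      (μ.prod μ)) :
    ∫ s in a..b, θ s • (φ s • h s + ∫ r in s..b, k r s • h r ∂μ) ∂μ =
      ∫ r in a..b, (θ r * φ r + ∫ s in a..r, θ s * k r s ∂μ) • h r ∂μ := by
  calc ∫ s in a..b, θ s • (φ s • h s + ∫ r in s..b, k r s • h r ∂μ) ∂μ
      = ∫ s in a..b, ((θ s * φ s) • h s + ∫ r in s..b, (θ s * k r s) • h r ∂μ) ∂μ := by
        simp only [smul_add, mul_smul, intervalIntegral.integral_smul]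
    _ = ∫ r in a..b, ((θ r * φ r) • h r + ∫ s in a..r, (θ s * k r s) • h r ∂μ) ∂μ := by
        rw [intervalIntegral.integral_add hdiag
            (intervalIntegrable_integral_volterraTriangle_fst hab htri),
          intervalIntegral.integral_add hdiag
            (intervalIntegrable_integral_volterraTriangle_snd hab htri),
          integral_integral_swap_volterraTriangle hab htri]
    _ = ∫ r in a..b, (θ r * φ r + ∫ s in a..r, θ s * k r s ∂μ) • h r ∂μ := by
        simp only [add_smul, intervalIntegral.integral_smul_const]

theorem composition_identity_KThetaStar_KFstar_general {t T : ℝ} (htT : t ≤ T)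
    {F F₁ : ℝ → ℝ → ℝ} {θ ζ : ℝ → ℝ} {h : ℝ → E}
    (hF : ContinuousOn (fun s => F s s) (Icc t T))
    (_hderiv : ∀ s r : ℝ, t ≤ s → s ≤ r → r ≤ T →
      HasDerivWithinAt (fun u => F u s) (F₁ r s) (Icc s T) r)
    (hF₁ : ContinuousOn (fun p : ℝ × ℝ => F₁ p.1 p.2) (volterraTriangle t T))
    (hθ : ContinuousOn θ (Icc t T))
    (hζ : ∀ r ∈ Icc t T, θ r * F r r + ∫ s in t..r, θ s * F₁ r s = ζ r)
    (hh : IntervalIntegrable h volume t T) :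
    ∫ s in t..T, θ s • (F s s • h s + ∫ r in s..T, F₁ r s • h r) = ∫ r in t..T, ζ r • h r := by
  have hdiag : IntervalIntegrable (fun s => (θ s * F s s) • h s) volume t T :=
    hh.continuousOn_smul ((uIcc_of_le htT).symm ▸ hθ.fun_mul hF)
  have hkernel : ContinuousOn (fun p : ℝ × ℝ => θ p.2 * F₁ p.1 p.2) (volterraTriangle t T) :=
    (hθ.comp continuousOn_snd fun _ hp => (volterraTriangle_subset_Icc_prod_Icc hp).2).mul hF₁
  have htri := integrableOn_volterraTriangle_smul_fst hkernel
    ((intervalIntegrable_iff_integrableOn_Icc_of_le htT).1 hh)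
  rw [integral_smul_add_integral_volterra_eq htT hdiag htri]
  refine intervalIntegral.integral_congr fun r hr => ?_
  rw [uIcc_of_le htT] at hr
  exact congrArg (· • h r) (hζ r hr)

end Composition

/-- Key computation in the proof of Theorem 3.2(2): if
`Θ(r,t)·F(r,r) + ∫_t^r Θ(s,t)·F₁(r,s) ds = ζ(r)` for all `0 ≤ t ≤ r ≤ T` (condition (A3)),
then `𝒦_Θ^*(K_F^* h)(t) = ∫_t^T ζ(r)·h(r) dr` for every continuous `h` and every
`t ∈ [0,T]`, where `(K_F^* h)(s) = F(s,s)h(s) + ∫_s^T F₁(r,s)h(r) dr`. -/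
theorem composition_identity_KThetaStar_KFstar
    (T : ℝ) (hT : 0 < T) (F F₁ Θ : ℝ → ℝ → ℝ) (ζ : ℝ → ℝ)
    (hFcont : ContinuousOn (fun p : ℝ × ℝ => F p.1 p.2) (Icc 0 T ×ˢ Icc 0 T))
    (hderiv : ∀ s r : ℝ, 0 ≤ s → s ≤ r → r ≤ T →
      HasDerivWithinAt (fun u => F u s) (F₁ r s) (Icc s T) r)
    (hF₁cont : ContinuousOn (fun p : ℝ × ℝ => F₁ p.1 p.2)
      {p : ℝ × ℝ | 0 ≤ p.2 ∧ p.2 ≤ p.1 ∧ p.1 ≤ T})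
    (hΘcont : ContinuousOn (fun p : ℝ × ℝ => Θ p.1 p.2)
      {p : ℝ × ℝ | 0 ≤ p.2 ∧ p.2 ≤ p.1 ∧ p.1 ≤ T})
    (hζ : ∀ t r : ℝ, 0 ≤ t → t ≤ r → r ≤ T →
      Θ r t * F r r + (∫ s in t..r, Θ s t * F₁ r s) = ζ r)
    (h : ℝ → ℝ) (hh : Continuous h) (t : ℝ) (ht : t ∈ Icc (0:ℝ) T) :
    ∫ s in t..T, Θ s t * (F s s * h s + ∫ r in s..T, F₁ r s * h r) =
      ∫ r in t..T, ζ r * h r := by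
  have hsub : Icc t T ⊆ Icc 0 T := Icc_subset_Icc_left ht.1
  have hF : ContinuousOn (fun s => F s s) (Icc t T) :=
    hFcont.comp (f := fun s => (s, s)) (by fun_prop) fun _ hs => ⟨hsub hs, hsub hs⟩
  have hF₁ : ContinuousOn (fun p : ℝ × ℝ => F₁ p.1 p.2) (volterraTriangle t T) :=
    hF₁cont.mono fun _ ⟨hts, hsrT⟩ => ⟨ht.1.trans hts, hsrT⟩
  have hΘ : ContinuousOn (fun s => Θ s t) (Icc t T) :=
    hΘcont.comp (f := fun s => (s, t)) (by fun_prop) fun _ hs => ⟨ht.1, hs⟩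
  exact composition_identity_KThetaStar_KFstar_general ht.2 hF
    (fun s r hts => hderiv s r (ht.1.trans hts)) hF₁ hΘ
    (fun r hr => hζ t r ht.1 hr.1 hr.2) (hh.intervalIntegrable t T)
end

section
/- Let T > 0 and let F₁ : [0,T]×[0,T] → ℝ be measurable and square-integrable with F₁(u,r) = 0 whenever r > u, and define F(t,s) = ∫_s^t F₁(u,s) du for 0 ≤ s ≤ t ≤ T. Then for all s, t ∈ [0,T], ∫_0^t ∫_0^s ( ∫_0^{min(u,v)} F₁(u,r)·F₁(v,r) dr ) dv du = ∫_0^{min(t,s)} F(t,r)·F(s,r) dr. -/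
open MeasureTheory Set

/-!
Since the kernels vanish above the diagonal, for `0 ≤ u ≤ t` and `0 ≤ v ≤ s` the integral over
`0 ≤ r ≤ min u v` may be taken over the fixed interval `0 ≤ r ≤ min t s`. For `r` in the latter,
likewise, `∫_r^t K u r du = ∫_0^t K u r du`. The domain is now a box, on which Fubini's theorem
applies: `(u, v, r) ↦ K u r * L v r` is a product of two square-integrable functions.
-/

section ProductMeasures

variable {α β γ : Type*} [MeasurableSpace α] [MeasurableSpace β] [MeasurableSpace γ]
  {μ : Measure α} {ν : Measure β} {κ : Measure γ} [SFinite μ]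

lemma memLp_prod_restrict_of_subset {E : Type*} [NormedAddCommGroup E] {f : β × α → E}
    {p : ENNReal} [SFinite ν] {s s' : Set β} {t t' : Set α}
    (hf : MemLp f p ((ν.prod μ).restrict (s ×ˢ t))) (hs : s' ⊆ s) (ht : t' ⊆ t) :
    MemLp f p ((ν.restrict s').prod (μ.restrict t')) := by
  rw [Measure.prod_restrict]
  exact hf.mono_measure (Measure.restrict_mono (prod_mono hs ht) le_rfl)

variable [IsFiniteMeasure ν] [IsFiniteMeasure κ]

lemma integrable_kernel_mul_kernel {R : Type*} [NormedRing R] {K : β → α → R} {L : γ → α → R}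
    (hK : MemLp K.uncurry 2 (ν.prod μ)) (hL : MemLp L.uncurry 2 (κ.prod μ)) :
    Integrable (fun q : (β × γ) × α => K q.1.1 q.2 * L q.1.2 q.2) ((ν.prod κ).prod μ) := by
  have hK' : MemLp (fun q : (β × γ) × α => K q.1.1 q.2) 2 ((ν.prod κ).prod μ) :=
    (hK.comp_snd κ).comp_measurePreserving <|
      (measurePreserving_prodAssoc κ ν μ).comp (Measure.measurePreserving_swap.prod (.id μ))
  have hL' : MemLp (fun q : (β × γ) × α => L q.1.2 q.2) 2 ((ν.prod κ).prod μ) :=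
    (hL.comp_snd ν).comp_measurePreserving (measurePreserving_prodAssoc ν κ μ)
  exact hK'.integrable_mul hL'

lemma integral_integral_integral_kernel_mul_kernel {𝕜 : Type*} [RCLike 𝕜] {K : β → α → 𝕜}
    {L : γ → α → 𝕜} (hK : MemLp K.uncurry 2 (ν.prod μ)) (hL : MemLp L.uncurry 2 (κ.prod μ)) :
    ∫ y, ∫ z, ∫ x, K y x * L z x ∂μ ∂κ ∂ν = ∫ x, (∫ y, K y x ∂ν) * ∫ z, L z x ∂κ ∂μ := by
  have hKL := integrable_kernel_mul_kernel hK hL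
  calc ∫ y, ∫ z, ∫ x, K y x * L z x ∂μ ∂κ ∂ν
      = ∫ p : β × γ, ∫ x, K p.1 x * L p.2 x ∂μ ∂ν.prod κ :=
        (integral_prod _ hKL.integral_prod_left).symm
    _ = ∫ x, ∫ p : β × γ, K p.1 x * L p.2 x ∂ν.prod κ ∂μ := integral_integral_swap hKL
    _ = ∫ x, (∫ y, K y x ∂ν) * ∫ z, L z x ∂κ ∂μ := by
        congr 1 with x
        exact integral_prod_mul (fun y => K y x) fun z => L z x

end ProductMeasures

section ExtendByZero

variable {E : Type*} [NormedAddCommGroup E] [NormedSpace ℝ E] {f : ℝ → E} {a b c : ℝ}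

lemma intervalIntegral_eq_of_eq_zero_right (hab : a ≤ b) (hbc : b ≤ c)
    (hf : ∀ x ∈ Ioc b c, f x = 0) : ∫ x in a..b, f x = ∫ x in a..c, f x := by
  rw [intervalIntegral.integral_of_le hab, intervalIntegral.integral_of_le (hab.trans hbc)]
  refine (setIntegral_eq_of_subset_of_forall_sdiff_eq_zero measurableSet_Ioc
    (Ioc_subset_Ioc_right hbc) fun x hx => hf x ⟨?_, hx.1.2⟩).symm
  exact lt_of_not_ge fun hxb => hx.2 ⟨hx.1.1, hxb⟩

lemma intervalIntegral_eq_of_eq_zero_left (hab : a ≤ b) (hbc : b ≤ c)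
    (hf : ∀ x ∈ Ioo a b, f x = 0) : ∫ x in b..c, f x = ∫ x in a..c, f x := by
  rw [intervalIntegral.integral_of_le hbc, intervalIntegral.integral_of_le (hab.trans hbc)]
  refine (setIntegral_eq_of_subset_of_ae_sdiff_eq_zero measurableSet_Ioc.nullMeasurableSet
    (Ioc_subset_Ioc_left hab) ?_).symm
  filter_upwards [volume.ae_ne b] with x hxb hx
  have hx_le : x ≤ b := le_of_not_gt fun hbx => hx.2 ⟨hbx, hx.1.2⟩
  exact hf x ⟨hx.1.1, hx_le.lt_of_ne hxb⟩

end ExtendByZero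

/-- A Volterra kernel on `S`: one that vanishes above the diagonal of `S × S`, so that the operator
it defines integrates only over the past. The first argument is the later time. -/
def IsVolterraOn {E : Type*} [Zero E] (K : ℝ → ℝ → E) (S : Set ℝ) : Prop :=
  ∀ ⦃u⦄, u ∈ S → ∀ ⦃r⦄, r ∈ S → u < r → K u r = 0

namespace IsVolterraOn

variable {T : ℝ}

lemma integral_diagonal_eq {E : Type*} [NormedAddCommGroup E] [NormedSpace ℝ E] {K : ℝ → ℝ → E}
    (hK : IsVolterraOn K (Icc 0 T)) {r t : ℝ} (hr : r ∈ Icc 0 T) (hrt : r ≤ t) :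
    ∫ u in r..t, K u r = ∫ u in 0..t, K u r :=
  intervalIntegral_eq_of_eq_zero_left hr.1 hrt fun _ hu =>
    hK ⟨hu.1.le, hu.2.le.trans hr.2⟩ hr hu.2

lemma integral_mul_min_eq {R : Type*} [NormedRing R] [NormedSpace ℝ R] {K L : ℝ → ℝ → R}
    (hK : IsVolterraOn K (Icc 0 T)) (hL : IsVolterraOn L (Icc 0 T)) {u v m : ℝ}
    (hu : u ∈ Icc 0 T) (hv : v ∈ Icc 0 T) (huvm : min u v ≤ m) (hmT : m ≤ T) :
    ∫ r in 0..min u v, K u r * L v r = ∫ r in 0..m, K u r * L v r := by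
  have h0 : 0 ≤ min u v := le_min hu.1 hv.1
  refine intervalIntegral_eq_of_eq_zero_right h0 huvm fun r hr => ?_
  have hrT : r ∈ Icc 0 T := ⟨h0.trans hr.1.le, hr.2.trans hmT⟩
  rcases min_lt_iff.1 hr.1 with hur | hvr
  · rw [hK hu hrT hur, zero_mul]
  · rw [hL hv hrT hvr, mul_zero]

end IsVolterraOn

theorem covariance_double_integral_general {𝕜 : Type*} [RCLike 𝕜] {T : ℝ}
    {K L F G : ℝ → ℝ → 𝕜}
    (hK : MemLp K.uncurry 2 (volume.restrict (Icc 0 T ×ˢ Icc 0 T)))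
    (hL : MemLp L.uncurry 2 (volume.restrict (Icc 0 T ×ˢ Icc 0 T)))
    (hK₀ : IsVolterraOn K (Icc 0 T)) (hL₀ : IsVolterraOn L (Icc 0 T))
    (hF : ∀ s t : ℝ, 0 ≤ s → s ≤ t → t ≤ T → F t s = ∫ u in s..t, K u s)
    (hG : ∀ s t : ℝ, 0 ≤ s → s ≤ t → t ≤ T → G t s = ∫ u in s..t, L u s)
    {s t : ℝ} (hs : s ∈ Icc 0 T) (ht : t ∈ Icc 0 T) :
    ∫ u in 0..t, ∫ v in 0..s, ∫ r in 0..min u v, K u r * L v r =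
      ∫ r in 0..min t s, F t r * G s r := by
  have hm0 : 0 ≤ min t s := le_min ht.1 hs.1
  have hmT : min t s ≤ T := (min_le_left t s).trans ht.2
  have hIoc {a : ℝ} (ha : a ≤ T) : Ioc 0 a ⊆ Icc 0 T :=
    Ioc_subset_Icc_self.trans (Icc_subset_Icc_right ha)
  calc ∫ u in 0..t, ∫ v in 0..s, ∫ r in 0..min u v, K u r * L v r
      = ∫ u in 0..t, ∫ v in 0..s, ∫ r in 0..min t s, K u r * L v r := by
        refine intervalIntegral.integral_congr fun u hu =>
          intervalIntegral.integral_congr fun v hv => ?_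
        rw [uIcc_of_le ht.1] at hu
        rw [uIcc_of_le hs.1] at hv
        exact hK₀.integral_mul_min_eq hL₀ ⟨hu.1, hu.2.trans ht.2⟩ ⟨hv.1, hv.2.trans hs.2⟩
          (min_le_min hu.2 hv.2) hmT
    _ = ∫ r in 0..min t s, (∫ u in 0..t, K u r) * ∫ v in 0..s, L v r := by
        simp only [intervalIntegral.integral_of_le, ht.1, hs.1, hm0]
        exact integral_integral_integral_kernel_mul_kernel
          (memLp_prod_restrict_of_subset hK (hIoc ht.2) (hIoc hmT))
          (memLp_prod_restrict_of_subset hL (hIoc hs.2) (hIoc hmT))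
    _ = ∫ r in 0..min t s, F t r * G s r := by
        refine intervalIntegral.integral_congr fun r hr => ?_
        rw [uIcc_of_le hm0] at hr
        have hrT : r ∈ Icc 0 T := ⟨hr.1, hr.2.trans hmT⟩
        have hrt : r ≤ t := hr.2.trans (min_le_left t s)
        have hrs : r ≤ s := hr.2.trans (min_le_right t s)
        simp only [hF r t hr.1 hrt ht.2, hG r s hr.1 hrs hs.2,
          hK₀.integral_diagonal_eq hrT hrt, hL₀.integral_diagonal_eq hrT hrs]

/-- Equation (3.29) in the proof of Lemma 3.10: for a square-integrable kernel `F₁` vanishing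
above the diagonal and `F(t,s) = ∫_s^t F₁(u,s) du`, the covariance of the `F`-Gaussian process
satisfies `∫_0^t ∫_0^s (∫_0^{u∧v} F₁(u,r)F₁(v,r) dr) dv du = ∫_0^{t∧s} F(t,r)F(s,r) dr`. -/
theorem covariance_double_integral
    (T : ℝ) (hT : 0 < T) (F₁ F : ℝ → ℝ → ℝ)
    (hF₁meas : Measurable (fun p : ℝ × ℝ => F₁ p.1 p.2))
    (hF₁L2 : IntegrableOn (fun p : ℝ × ℝ => (F₁ p.1 p.2) ^ 2) (Icc 0 T ×ˢ Icc 0 T))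
    (hvanish : ∀ u r : ℝ, u < r → F₁ u r = 0)
    (hF : ∀ s t : ℝ, 0 ≤ s → s ≤ t → t ≤ T → F t s = ∫ u in s..t, F₁ u s)
    (s t : ℝ) (hs : s ∈ Icc (0:ℝ) T) (ht : t ∈ Icc (0:ℝ) T) :
    (∫ u in (0:ℝ)..t, ∫ v in (0:ℝ)..s, ∫ r in (0:ℝ)..(min u v), F₁ u r * F₁ v r) =
      ∫ r in (0:ℝ)..(min t s), F t r * F s r := by
  have hL2 : MemLp F₁.uncurry 2 (volume.restrict (Icc 0 T ×ˢ Icc 0 T)) :=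
    (memLp_two_iff_integrable_sq hF₁meas.aestronglyMeasurable).2 hF₁L2
  have hVolterra : IsVolterraOn F₁ (Icc 0 T) := fun u _ r _ => hvanish u r
  exact covariance_double_integral_general hL2 hL2 hVolterra hVolterra hF hF hs ht
end

section
/- Let T > 0 and let F : [0,T]×[0,T] → ℝ be continuous such that the partial derivative F₁(t,s) = ∂F(t,s)/∂t exists on the triangle {(t,s) : 0 ≤ s ≤ t ≤ T} and is square-integrable there. Then for every δ > 0 and every h ∈ L²([0,T];ℝ), ∫_0^T ( F(t,t)·h(t) + ∫_0^t F₁(t,s)·h(s) ds )² dt ≤ ( (1+δ)·sup_{t∈[0,T]} F(t,t)² + ((1+δ)/δ)·∫_0^T ∫_0^t F₁(t,s)² ds dt ) · ∫_0^T h(s)² ds. -/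
open MeasureTheory Set

/-!
`h ↦ F(t,t) h(t) + ∫_0^t F₁(t,s) h(s) ds` is a multiplication operator plus the Hilbert–Schmidt
operator on `L²([0,T])` with kernel `1_{s ≤ t} F₁(t,s)`. The squared operator norms of the two are
at most `sup_t F(t,t)²` and `∫_0^T ∫_0^t F₁(t,s)² ds dt`, and Young's inequality with weight `δ`
combines the two bounds.
-/

lemma norm_add_sq_le_of_pos {E : Type*} [SeminormedAddCommGroup E] {δ : ℝ} (hδ : 0 < δ) (x y : E) :
    ‖x + y‖ ^ 2 ≤ (1 + δ) * ‖x‖ ^ 2 + (1 + δ) / δ * ‖y‖ ^ 2 :=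
  calc ‖x + y‖ ^ 2 ≤ (‖x‖ + ‖y‖) ^ 2 := by gcongr; exact norm_add_le x y
    _ = ‖x‖ ^ 2 + 2 * ‖x‖ * ‖y‖ + ‖y‖ ^ 2 := add_sq _ _
    _ ≤ ‖x‖ ^ 2 + (δ * ‖x‖ ^ 2 + δ⁻¹ * ‖y‖ ^ 2) + ‖y‖ ^ 2 := by
      gcongr
      exact two_mul_le_add_mul_sq hδ
    _ = (1 + δ) * ‖x‖ ^ 2 + (1 + δ) / δ * ‖y‖ ^ 2 := by field_simp; ring

lemma bddAbove_range_norm_diagonal_sq {X G : Type*} [TopologicalSpace X]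
    [SeminormedAddCommGroup G] {K : Set X} (hK : IsCompact K) {F : X → X → G}
    (hF : ContinuousOn (fun p : X × X => F p.1 p.2) (K ×ˢ K)) :
    BddAbove (range fun t : K => ‖F t t‖ ^ 2) := by
  have hdiagonal : ContinuousOn (fun t => ‖F t t‖ ^ 2) K :=
    (hF.comp (continuous_id.prodMk continuous_id).continuousOn fun _ ht => ⟨ht, ht⟩).norm.pow 2
  simpa only [image_eq_range] using hK.bddAbove_image hdiagonal

section L2

variable {α β G : Type*} {mα : MeasurableSpace α} {mβ : MeasurableSpace β} {μ : Measure α}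
  {ν : Measure β} [NormedAddCommGroup G]

lemma integral_norm_mul_norm_sq_le {H : Type*} [NormedAddCommGroup H] {f : α → G} {g : α → H}
    (hf : MemLp f 2 μ) (hg : MemLp g 2 μ) :
    (∫ x, ‖f x‖ * ‖g x‖ ∂μ) ^ 2 ≤ (∫ x, ‖f x‖ ^ 2 ∂μ) * ∫ x, ‖g x‖ ^ 2 ∂μ := by
  have holder : ∫ x, ‖f x‖ * ‖g x‖ ∂μ ≤ √(∫ x, ‖f x‖ ^ 2 ∂μ) * √(∫ x, ‖g x‖ ^ 2 ∂μ) := by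
    simpa [Real.sqrt_eq_rpow] using
      integral_mul_le_Lp_mul_Lq_of_nonneg .two_two (ae_of_all μ fun x => norm_nonneg (f x))
        (ae_of_all μ fun x => norm_nonneg (g x)) (by simpa using hf.norm) (by simpa using hg.norm)
  calc (∫ x, ‖f x‖ * ‖g x‖ ∂μ) ^ 2
      ≤ (√(∫ x, ‖f x‖ ^ 2 ∂μ) * √(∫ x, ‖g x‖ ^ 2 ∂μ)) ^ 2 := by gcongr
    _ = (∫ x, ‖f x‖ ^ 2 ∂μ) * ∫ x, ‖g x‖ ^ 2 ∂μ := by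
      rw [mul_pow, Real.sq_sqrt (by positivity), Real.sq_sqrt (by positivity)]

lemma ae_memLp_of_memLp_uncurry [SFinite μ] [SFinite ν] {p : ENNReal} (hp_zero : p ≠ 0)
    (hp_top : p ≠ ⊤) {k : α → β → G} (hk : MemLp (Function.uncurry k) p (μ.prod ν)) :
    ∀ᵐ x ∂μ, MemLp (k x) p ν := by
  have hk_pow := (integrable_norm_rpow_iff hk.1 hp_zero hp_top).2 hk
  filter_upwards [hk.1.prodMk_left, hk_pow.prod_right_ae] with x hmeas hpow
  exact (integrable_norm_rpow_iff hmeas hp_zero hp_top).1 hpow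

end L2

section Operators

variable {α 𝕜 E : Type*} {mα : MeasurableSpace α} {μ : Measure α} [NormedRing 𝕜]
  [NormedAddCommGroup E] [NormedSpace ℝ E] [Module 𝕜 E] [IsBoundedSMul 𝕜 E]

lemma norm_integral_smul_sq_le {f : α → 𝕜} {g : α → E} (hf : MemLp f 2 μ) (hg : MemLp g 2 μ) :
    ‖∫ x, f x • g x ∂μ‖ ^ 2 ≤ (∫ x, ‖f x‖ ^ 2 ∂μ) * ∫ x, ‖g x‖ ^ 2 ∂μ := by
  refine le_trans ?_ (integral_norm_mul_norm_sq_le hf hg)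
  gcongr
  exact norm_integral_le_of_norm_le (hf.norm.integrable_mul hg.norm)
    (ae_of_all _ fun x => norm_smul_le (f x) (g x))

theorem integral_norm_smul_add_integral_smul_sq_le [SFinite μ] {m : α → 𝕜} {k : α → α → 𝕜}
    {h : α → E} {S : ℝ} (hm : ∀ᵐ x ∂μ, ‖m x‖ ^ 2 ≤ S)
    (hk : MemLp (Function.uncurry k) 2 (μ.prod μ)) (hh : MemLp h 2 μ) {δ : ℝ} (hδ : 0 < δ) :
    ∫ x, ‖m x • h x + ∫ y, k x y • h y ∂μ‖ ^ 2 ∂μ ≤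
      ((1 + δ) * S + (1 + δ) / δ * ∫ x, ∫ y, ‖k x y‖ ^ 2 ∂μ ∂μ) * ∫ y, ‖h y‖ ^ 2 ∂μ := by
  set N := ∫ y, ‖h y‖ ^ 2 ∂μ
  have hmul_int : Integrable (fun x => (1 + δ) * (S * ‖h x‖ ^ 2)) μ :=
    (((memLp_two_iff_integrable_sq_norm hh.1).1 hh).const_mul S).const_mul _
  have hker_int : Integrable (fun x => (1 + δ) / δ * ((∫ y, ‖k x y‖ ^ 2 ∂μ) * N)) μ :=
    ((((memLp_two_iff_integrable_sq_norm hk.1).1 hk).integral_prod_left).mul_const N).const_mul _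
  have hpointwise : ∀ᵐ x ∂μ, ‖m x • h x + ∫ y, k x y • h y ∂μ‖ ^ 2 ≤
      (1 + δ) * (S * ‖h x‖ ^ 2) + (1 + δ) / δ * ((∫ y, ‖k x y‖ ^ 2 ∂μ) * N) := by
    filter_upwards [hm, ae_memLp_of_memLp_uncurry two_ne_zero (by simp) hk] with x hmx hkx
    have hmul : ‖m x • h x‖ ^ 2 ≤ S * ‖h x‖ ^ 2 :=
      calc ‖m x • h x‖ ^ 2 ≤ (‖m x‖ * ‖h x‖) ^ 2 := by gcongr; exact norm_smul_le _ _
        _ = ‖m x‖ ^ 2 * ‖h x‖ ^ 2 := mul_pow _ _ _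
        _ ≤ S * ‖h x‖ ^ 2 := by gcongr
    refine (norm_add_sq_le_of_pos hδ _ _).trans ?_
    gcongr
    exact norm_integral_smul_sq_le hkx hh
  calc ∫ x, ‖m x • h x + ∫ y, k x y • h y ∂μ‖ ^ 2 ∂μ
      ≤ ∫ x, (1 + δ) * (S * ‖h x‖ ^ 2) + (1 + δ) / δ * ((∫ y, ‖k x y‖ ^ 2 ∂μ) * N) ∂μ :=
        integral_mono_of_nonneg (ae_of_all _ fun _ => by positivity) (hmul_int.add hker_int)
          hpointwise
    _ = ((1 + δ) * S + (1 + δ) / δ * ∫ x, ∫ y, ‖k x y‖ ^ 2 ∂μ ∂μ) * N := by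
        rw [integral_add hmul_int hker_int]
        simp only [integral_const_mul, integral_mul_const]
        ring

end Operators

/-- The kernel `1_{s ≤ t} k(t, s)`, whose integral operator over `[a, b]` is the Volterra operator
`h ↦ ∫_a^t k(t, s) h(s) ds` of `k`. -/
noncomputable def volterraKernel {G : Type*} [Zero G] (k : ℝ → ℝ → G) (t : ℝ) : ℝ → G :=
  (Iic t).indicator (k t)

section Volterra

variable {G : Type*} [NormedAddCommGroup G] {a b t : ℝ} {μ : Measure ℝ}

lemma setIntegral_Ioc_indicator_Iic [NormedSpace ℝ G] (ht : t ∈ Icc a b) (f : ℝ → G) :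
    ∫ s in Ioc a b, (Iic t).indicator f s ∂μ = ∫ s in a..t, f s ∂μ := by
  rw [setIntegral_indicator measurableSet_Iic, Ioc_inter_Iic, min_eq_right ht.2,
    intervalIntegral.integral_of_le ht.1]

lemma setIntegral_volterraKernel_smul {𝕜 E : Type*} [Zero 𝕜] [NormedAddCommGroup E]
    [NormedSpace ℝ E] [SMulWithZero 𝕜 E] (ht : t ∈ Icc a b) (k : ℝ → ℝ → 𝕜) (h : ℝ → E) :
    ∫ s in Ioc a b, volterraKernel k t s • h s ∂μ = ∫ s in a..t, k t s • h s ∂μ := by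
  simp only [volterraKernel, ← indicator_smul_apply_left, setIntegral_Ioc_indicator_Iic ht]

lemma setIntegral_norm_volterraKernel_sq (ht : t ∈ Icc a b) (k : ℝ → ℝ → G) :
    ∫ s in Ioc a b, ‖volterraKernel k t s‖ ^ 2 ∂μ = ∫ s in a..t, ‖k t s‖ ^ 2 ∂μ := by
  rw [← setIntegral_Ioc_indicator_Iic ht]
  refine integral_congr_ae (ae_of_all _ fun s => ?_)
  by_cases hs : s ≤ t <;> simp [volterraKernel, hs]

lemma memLp_volterraKernel [SFinite μ] {q : ENNReal} {k : ℝ → ℝ → G}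
    (hk : MemLp (Function.uncurry k) q
      ((μ.prod μ).restrict {p | a ≤ p.2 ∧ p.2 ≤ p.1 ∧ p.1 ≤ b})) :
    MemLp (Function.uncurry (volterraKernel k)) q
      ((μ.restrict (Ioc a b)).prod (μ.restrict (Ioc a b))) := by
  have hindicator : Function.uncurry (volterraKernel k) =
      {p : ℝ × ℝ | p.2 ≤ p.1}.indicator (Function.uncurry k) := by
    ext ⟨t, s⟩
    simp [volterraKernel, indicator_apply]
  have hmeas : MeasurableSet {p : ℝ × ℝ | p.2 ≤ p.1} :=
    measurableSet_le measurable_snd measurable_fst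
  have hsubset : {p : ℝ × ℝ | p.2 ≤ p.1} ∩ Ioc a b ×ˢ Ioc a b ⊆
      {p | a ≤ p.2 ∧ p.2 ≤ p.1 ∧ p.1 ≤ b} :=
    fun _ ⟨hle, hfst, hsnd⟩ => ⟨hsnd.1.le, hle, hfst.2⟩
  rw [hindicator, memLp_indicator_iff_restrict hmeas, Measure.prod_restrict,
    Measure.restrict_restrict hmeas]
  exact hk.mono_measure (Measure.restrict_mono_set _ hsubset)

end Volterra

theorem OU_LSI_key_estimate_general {𝕜 E : Type*} [NormedRing 𝕜] [NormedAddCommGroup E]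
    [NormedSpace ℝ E] [Module 𝕜 E] [IsBoundedSMul 𝕜 E] {μ : Measure ℝ} [SFinite μ] {a b : ℝ}
    (hab : a ≤ b) {m : ℝ → 𝕜} {k : ℝ → ℝ → 𝕜} {h : ℝ → E}
    (hm : BddAbove (range fun t : Icc a b => ‖m t‖ ^ 2))
    (hk : MemLp (Function.uncurry k) 2
      ((μ.prod μ).restrict {p | a ≤ p.2 ∧ p.2 ≤ p.1 ∧ p.1 ≤ b}))
    (hh : MemLp h 2 (μ.restrict (Icc a b))) {δ : ℝ} (hδ : 0 < δ) :
    ∫ t in a..b, ‖m t • h t + ∫ s in a..t, k t s • h s ∂μ‖ ^ 2 ∂μ ≤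
      ((1 + δ) * (⨆ t : Icc a b, ‖m t‖ ^ 2) +
          (1 + δ) / δ * ∫ t in a..b, ∫ s in a..t, ‖k t s‖ ^ 2 ∂μ ∂μ) *
        ∫ s in a..b, ‖h s‖ ^ 2 ∂μ := by
  have hm_le : ∀ᵐ t ∂μ.restrict (Ioc a b), ‖m t‖ ^ 2 ≤ ⨆ t : Icc a b, ‖m t‖ ^ 2 :=
    ae_restrict_of_forall_mem measurableSet_Ioc fun t ht =>
      le_ciSup hm (⟨t, Ioc_subset_Icc_self ht⟩ : Icc a b)
  have hestimate := integral_norm_smul_add_integral_smul_sq_le hm_le (memLp_volterraKernel hk)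
    (hh.mono_measure (Measure.restrict_mono_set _ Ioc_subset_Icc_self)) hδ
  have hvolterra : ∀ t ∈ Ioc a b, ‖m t • h t + ∫ s in Ioc a b, volterraKernel k t s • h s ∂μ‖ ^ 2 =
      ‖m t • h t + ∫ s in a..t, k t s • h s ∂μ‖ ^ 2 := fun t ht => by
    rw [setIntegral_volterraKernel_smul (Ioc_subset_Icc_self ht)]
  have hkernel : ∀ t ∈ Ioc a b, ∫ s in Ioc a b, ‖volterraKernel k t s‖ ^ 2 ∂μ =
      ∫ s in a..t, ‖k t s‖ ^ 2 ∂μ := fun t ht =>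
    setIntegral_norm_volterraKernel_sq (Ioc_subset_Icc_self ht) k
  rw [setIntegral_congr_fun measurableSet_Ioc hvolterra,
    setIntegral_congr_fun measurableSet_Ioc hkernel] at hestimate
  simpa only [intervalIntegral.integral_of_le hab] using hestimate

/-- The key estimate (5.15) in the proof of the Ornstein–Uhlenbeck logarithmic Sobolev
inequality (Theorem 5.3):
`∫_0^T (F(t,t)h(t) + ∫_0^t F₁(t,s)h(s) ds)² dt ≤
  ((1+δ)·sup_{t∈[0,T]} F(t,t)² + ((1+δ)/δ)·∫_0^T∫_0^t F₁(t,s)² ds dt)·∫_0^T h(s)² ds`. -/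
theorem OU_LSI_key_estimate
    (T : ℝ) (hT : 0 < T) (F F₁ : ℝ → ℝ → ℝ)
    (hFcont : ContinuousOn (fun p : ℝ × ℝ => F p.1 p.2) (Icc 0 T ×ˢ Icc 0 T))
    (hderiv : ∀ s t : ℝ, 0 ≤ s → s ≤ t → t ≤ T →
      HasDerivWithinAt (fun u => F u s) (F₁ t s) (Icc s T) t)
    (hF₁meas : Measurable (fun p : ℝ × ℝ => F₁ p.1 p.2))
    (hF₁L2 : IntegrableOn (fun p : ℝ × ℝ => (F₁ p.1 p.2) ^ 2)
      {p : ℝ × ℝ | 0 ≤ p.2 ∧ p.2 ≤ p.1 ∧ p.1 ≤ T})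
    (δ : ℝ) (hδ : 0 < δ) (h : ℝ → ℝ)
    (hhmeas : Measurable h) (hhL2 : IntegrableOn (fun s => (h s) ^ 2) (Icc 0 T)) :
    ∫ t in (0:ℝ)..T, (F t t * h t + ∫ s in (0:ℝ)..t, F₁ t s * h s) ^ 2 ≤
      ((1 + δ) * (⨆ t : Icc (0:ℝ) T, (F t t) ^ 2) +
          ((1 + δ) / δ) * ∫ t in (0:ℝ)..T, ∫ s in (0:ℝ)..t, (F₁ t s) ^ 2) *
        ∫ s in (0:ℝ)..T, (h s) ^ 2 := by
  have hF₁ := (memLp_two_iff_integrable_sq hF₁meas.aestronglyMeasurable).2 hF₁L2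
  have hh := (memLp_two_iff_integrable_sq hhmeas.aestronglyMeasurable).2 hhL2
  have hdiagonal := bddAbove_range_norm_diagonal_sq isCompact_Icc hFcont
  simpa only [Real.norm_eq_abs, sq_abs, smul_eq_mul] using
    OU_LSI_key_estimate_general hT.le hdiagonal hF₁ hh hδ
end
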